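/- Every cycle-tree T admits a closed walk W that uses each edge lying on a block cycle exactly once and each edge lying on a block path exactly twice, crossing from one block to another block at each cut-point. Moreover, any such walk W is a closed walk of minimum length among closed walks using all edges of T, and conversely every minimum-length closed walk using all edges of T has this form. -/

import Mathlib

open Finset

/-- An oriented signed graph: each edge has an ordered pair of end-vertices and
an orientation value (`±1`) at each of its two ends.  The sign of an edge `e` is
`-ε₁(e)·ε₂(e)`. -/
structure OSG (V E : Type) where
  ends : E → V × V
  eps : E → ℤ × ℤ
  eps1 : ∀ e, (eps e).1 = 1 ∨ (eps e).1 = -1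
  eps2 : ∀ e, (eps e).2 = 1 ∨ (eps e).2 = -1

namespace OSG

variable {V E : Type} [DecidableEq V] [DecidableEq E] [Fintype E]

/-- The sign `σ(e)` of an edge. -/
def sign (G : OSG V E) (e : E) : ℤ := -((G.eps e).1 * (G.eps e).2)

/-- Boundary of an integer-valued function at a vertex. -/
def boundary (G : OSG V E) (f : E → ℤ) (v : V) : ℤ :=
  ∑ e : E, ((if (G.ends e).1 = v then (G.eps e).1 * f e else 0) +
            (if (G.ends e).2 = v then (G.eps e).2 * f e else 0))

/-- An integral flow: boundary vanishes at every vertex. -/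
def IsFlow (G : OSG V E) (f : E → ℤ) : Prop := ∀ v, G.boundary f v = 0

/-- Boundary of a real-valued function at a vertex. -/
def boundaryR (G : OSG V E) (f : E → ℝ) (v : V) : ℝ :=
  ∑ e : E, ((if (G.ends e).1 = v then ((G.eps e).1 : ℝ) * f e else 0) +
            (if (G.ends e).2 = v then ((G.eps e).2 : ℝ) * f e else 0))

/-- A real flow. -/
def IsFlowR (G : OSG V E) (f : E → ℝ) : Prop := ∀ v, G.boundaryR f v = 0

/-- A walk of length `n`: vertices `u 0, …, u n`, edges `x 0, …, x (n-1)`, where the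
`i`-th edge joins `u i` and `u (i+1)`; `fwd i` records whether the edge is traversed
from its first end to its second end. -/
structure Walk (G : OSG V E) (n : ℕ) where
  u : Fin (n + 1) → V
  x : Fin n → E
  fwd : Fin n → Bool
  compat_t : ∀ i : Fin n, fwd i = true → G.ends (x i) = (u i.castSucc, u i.succ)
  compat_f : ∀ i : Fin n, fwd i = false → G.ends (x i) = (u i.succ, u i.castSucc)

variable {G : OSG V E}

/-- A closed walk. -/
def Walk.IsClosed {n : ℕ} (W : G.Walk n) : Prop := W.u 0 = W.u (Fin.last n)

/-- The sign of a walk: product of the signs of its edges with multiplicity. -/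
def Walk.sgn {n : ℕ} (W : G.Walk n) : ℤ := ∏ i : Fin n, G.sign (W.x i)

/-- The support (underlying edge set) of a walk. -/
def Walk.support {n : ℕ} (W : G.Walk n) : Finset E := Finset.image W.x Finset.univ

/-- The number of occurrences of an edge in a walk. -/
def Walk.edgeCount {n : ℕ} (W : G.Walk n) (e : E) : ℕ :=
  (Finset.univ.filter (fun i => W.x i = e)).card

/-- The edge multiset of a walk. -/
def Walk.edgeMultiset {n : ℕ} (W : G.Walk n) : Multiset E :=
  Multiset.map W.x Finset.univ.val

/-- A direction `ε_W` of a walk: `a i = ε_W(u_i, x_{i+1})` is the value at the initial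
vertex of the `i`-th edge, `b i = ε_W(u_{i+1}, x_{i+1})` the value at its terminal
vertex; consecutive incidence values at an internal vertex cancel. -/
structure Direction {n : ℕ} (W : G.Walk n) where
  a : Fin n → ℤ
  b : Fin n → ℤ
  a_unit : ∀ i, a i = 1 ∨ a i = -1
  b_unit : ∀ i, b i = 1 ∨ b i = -1
  edge_rel : ∀ i, a i * b i = - G.sign (W.x i)
  consec : ∀ (i : Fin n) (h : i.val + 1 < n), b i + a ⟨i.val + 1, h⟩ = 0

/-- The closing condition for a direction of a closed walk:
`ε_W(u_0,x_1) + ε_W(u_n,x_n) = 0`. -/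
def Direction.IsClosedDir {n : ℕ} {W : G.Walk n} (d : Direction W) (hn : 0 < n) : Prop :=
  d.a ⟨0, hn⟩ + d.b ⟨n - 1, by omega⟩ = 0

/-- Midway-back avoided: whenever `u_α = u_β` (`α < β < n`),
`ε_W(u_β, x_β) = ε_W(u_α, x_{α+1})`. -/
def Direction.MBA {n : ℕ} {W : G.Walk n} (d : Direction W) : Prop :=
  ∀ (α β : Fin n), α.val < β.val → W.u α.castSucc = W.u β.castSucc →
    d.b ⟨β.val - 1, by have := β.isLt; omega⟩ = d.a α

/-- The orientation that occurrence `i` of the walk induces on its edge, recorded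
as the pair of values at the first and second ends of the edge. -/
def Direction.occOrient {n : ℕ} {W : G.Walk n} (d : Direction W) (i : Fin n) : ℤ × ℤ :=
  if W.fwd i then (d.a i, d.b i) else (d.b i, d.a i)

/-- A directed Eulerian walk: a directed closed walk of positive sign whose direction
induces the same orientation on all occurrences of each repeated edge. -/
def Direction.IsEulerian {n : ℕ} {W : G.Walk n} (d : Direction W) (hn : 0 < n) : Prop :=
  W.IsClosed ∧ d.IsClosedDir hn ∧ W.sgn = 1 ∧
    ∀ p q : Fin n, W.x p = W.x q → d.occOrient p = d.occOrient q

/-- A minimal (directed) Eulerian walk: no Eulerian walk is properly contained in it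
as edge multisets. -/
def Direction.IsMinimalEulerian {n : ℕ} {W : G.Walk n} (d : Direction W) (hn : 0 < n) : Prop :=
  d.IsEulerian hn ∧
    ∀ (m : ℕ) (hm : 0 < m) (W' : G.Walk m) (d' : Direction W'),
      d'.IsEulerian hm → W'.edgeMultiset ≤ W.edgeMultiset →
        W'.edgeMultiset = W.edgeMultiset

/-- The coupling `[ε, ε_W](x_i)` of the ambient orientation with the walk direction at
occurrence `i` (computed at the terminal vertex of the occurrence). -/
def Direction.coupleAt {n : ℕ} {W : G.Walk n} (d : Direction W) (i : Fin n) : ℤ :=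
  (if W.fwd i then (G.eps (W.x i)).2 else (G.eps (W.x i)).1) * d.b i

/-- The characteristic vector `f_{(W,ε_W)}` of a directed walk. -/
def Direction.charVec {n : ℕ} {W : G.Walk n} (d : Direction W) : E → ℤ :=
  fun e => ∑ i : Fin n, if W.x i = e then d.coupleAt i else 0

/-- The reorientation `ε_f` of `G` along the negative edges of `f : E → ℝ`. -/
noncomputable def reorientR (G : OSG V E) (f : E → ℝ) : OSG V E where
  ends := G.ends
  eps := fun e => if f e < 0 then (-(G.eps e).1, -(G.eps e).2) else G.eps e
  eps1 := by
    intro e; by_cases h : f e < 0 <;> rcases G.eps1 e with h1 | h1 <;> simp [h, h1]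
  eps2 := by
    intro e; by_cases h : f e < 0 <;> rcases G.eps2 e with h1 | h1 <;> simp [h, h1]

/-- Vertex set spanned by an edge set. -/
def verts (G : OSG V E) (S : Finset E) : Finset V :=
  S.image (fun e => (G.ends e).1) ∪ S.image (fun e => (G.ends e).2)

/-- Adjacency via an edge of `S`. -/
def adjOn (G : OSG V E) (S : Finset E) (v w : V) : Prop :=
  ∃ e ∈ S, G.ends e = (v, w) ∨ G.ends e = (w, v)

/-- Reachability inside the subgraph induced by `S`. -/
def Reach (G : OSG V E) (S : Finset E) : V → V → Prop :=
  Relation.ReflTransGen (G.adjOn S)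

/-- Connectivity of the subgraph induced by `S`. -/
def ConnectedOn (G : OSG V E) (S : Finset E) : Prop :=
  ∀ v ∈ G.verts S, ∀ w ∈ G.verts S, G.Reach S v w

/-- `v` is a cut-point of the subgraph induced by `S`: two vertices of the subgraph,
distinct from `v`, are joined in the subgraph but not after deleting `v`. -/
def IsCutPoint (G : OSG V E) (S : Finset E) (v : V) : Prop :=
  ∃ a ∈ G.verts S, ∃ b ∈ G.verts S, a ≠ v ∧ b ≠ v ∧ G.Reach S a b ∧
    ¬ Relation.ReflTransGen (fun p q => p ≠ v ∧ q ≠ v ∧ G.adjOn S p q) a b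

/-- `S` is the edge set of a cycle (simple closed path). -/
def IsCycleSet (G : OSG V E) (S : Finset E) : Prop :=
  ∃ (n : ℕ) (W : G.Walk n), 0 < n ∧ W.IsClosed ∧ Function.Injective W.x ∧
    (∀ i j : Fin n, W.u i.castSucc = W.u j.castSucc → i = j) ∧ W.support = S

/-- `S` is the edge set of a simple path of positive length from `a` to `b`. -/
def IsPathSet (G : OSG V E) (S : Finset E) (a b : V) : Prop :=
  ∃ (n : ℕ) (W : G.Walk n), 0 < n ∧ W.u 0 = a ∧ W.u (Fin.last n) = b ∧
    Function.Injective W.u ∧ Function.Injective W.x ∧ W.support = S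

/-- The sign of an edge set (product of edge signs). -/
def signSet (G : OSG V E) (S : Finset E) : ℤ := ∏ e ∈ S, G.sign e

/-- The intersection vertices determined by a family of block cycles and block paths:
common vertices of two distinct block cycles, together with endpoints of block paths. -/
def interVertsOf (G : OSG V E) (cycles : Finset (Finset E))
    (paths : Finset (Finset E × V × V)) : Finset V :=
  (cycles.biUnion fun C => cycles.biUnion fun C' =>
      if C = C' then ∅ else G.verts C ∩ G.verts C') ∪
    paths.biUnion fun p => {p.2.1, p.2.2}

/-- A cycle-tree: a connected signed subgraph decomposed into edge-disjoint block
cycles (comprising all its cycles) and vertex-disjoint block paths (each of positive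
length, joining exactly two block cycles precisely at its endpoints), all of whose
intersection vertices are cut-points.  Block cycles may also meet directly in a single
common vertex (a block path of zero length). -/
structure CycleTree (G : OSG V E) where
  edges : Finset E
  cycles : Finset (Finset E)
  paths : Finset (Finset E × V × V)
  conn : G.ConnectedOn edges
  cycles_nonempty : cycles.Nonempty
  cyc_is : ∀ C ∈ cycles, G.IsCycleSet C
  cyc_all : ∀ C ⊆ edges, G.IsCycleSet C → C ∈ cycles
  path_is : ∀ p ∈ paths, G.IsPathSet p.1 p.2.1 p.2.2
  partition : edges = cycles.biUnion id ∪ paths.biUnion (fun p => p.1)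
  cyc_disj : ∀ C ∈ cycles, ∀ C' ∈ cycles, C ≠ C' → Disjoint C C'
  cyc_path_disj : ∀ C ∈ cycles, ∀ p ∈ paths, Disjoint C p.1
  path_vdisj : ∀ p ∈ paths, ∀ q ∈ paths, p ≠ q → Disjoint (G.verts p.1) (G.verts q.1)
  cyc_meet : ∀ C ∈ cycles, ∀ C' ∈ cycles, C ≠ C' → (G.verts C ∩ G.verts C').card ≤ 1
  path_meets : ∀ p ∈ paths, ∃ C1 ∈ cycles, ∃ C2 ∈ cycles, C1 ≠ C2 ∧
    G.verts C1 ∩ G.verts p.1 = {p.2.1} ∧ G.verts C2 ∩ G.verts p.1 = {p.2.2} ∧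
    ∀ C ∈ cycles, C ≠ C1 → C ≠ C2 → G.verts C ∩ G.verts p.1 = ∅
  cuts : ∀ v ∈ G.interVertsOf cycles paths, G.IsCutPoint edges v

namespace CycleTree

variable (T : CycleTree G)

/-- Intersection vertices of a cycle-tree. -/
def interVerts : Finset V := G.interVertsOf T.cycles T.paths

/-- Edges lying on block cycles. -/
def cycleEdges : Finset E := T.cycles.biUnion id

/-- Edges lying on block paths. -/
def pathEdges : Finset E := T.paths.biUnion (fun p => p.1)

/-- The indicator `I_T`: 1 on block-cycle edges, 2 on block-path edges, 0 elsewhere. -/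
def indicator : E → ℤ :=
  fun e => if e ∈ T.cycleEdges then 1 else if e ∈ T.pathEdges then 2 else 0

/-- The indicator `I_T`, valued in `ℕ`. -/
def indicatorNat : E → ℕ :=
  fun e => if e ∈ T.cycleEdges then 1 else if e ∈ T.pathEdges then 2 else 0

/-- The Parity Condition: each balanced block cycle carries an even number of
intersection vertices, each unbalanced block cycle an odd number. -/
def IsEulerian : Prop :=
  ∀ C ∈ T.cycles,
    if G.signSet C = 1 then Even ((G.verts C ∩ T.interVerts).card)
    else Odd ((G.verts C ∩ T.interVerts).card)

end CycleTree

/-- `v` is a sink of the orientation `o` on the subgraph `S`: all incidences at `v`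
have value `-1`. -/
def IsSinkAt (G : OSG V E) (S : Finset E) (o : E → ℤ × ℤ) (v : V) : Prop :=
  v ∈ G.verts S ∧ ∀ e ∈ S,
    ((G.ends e).1 = v → (o e).1 = -1) ∧ ((G.ends e).2 = v → (o e).2 = -1)

/-- `v` is a source of the orientation `o` on the subgraph `S`. -/
def IsSourceAt (G : OSG V E) (S : Finset E) (o : E → ℤ × ℤ) (v : V) : Prop :=
  v ∈ G.verts S ∧ ∀ e ∈ S,
    ((G.ends e).1 = v → (o e).1 = 1) ∧ ((G.ends e).2 = v → (o e).2 = 1)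

/-- A direction of a cycle-tree: an orientation of the subgraph with neither sink nor
source, whose restriction to each block cycle has a sink or a source at each
intersection vertex on that cycle. -/
def CycleTree.IsDirection (T : CycleTree G) (o : E → ℤ × ℤ) : Prop :=
  (∀ e ∈ T.edges, ((o e).1 = 1 ∨ (o e).1 = -1) ∧ (o e).1 * (o e).2 = - G.sign e) ∧
  (∀ v ∈ G.verts T.edges, ¬ G.IsSinkAt T.edges o v ∧ ¬ G.IsSourceAt T.edges o v) ∧
  (∀ C ∈ T.cycles, ∀ v ∈ G.verts C ∩ T.interVerts, G.IsSinkAt C o v ∨ G.IsSourceAt C o v)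

/-- The coupling `[ε, ε_T]` of the ambient orientation with an orientation `o` of the
subgraph `T`. -/
def CycleTree.coupling (T : CycleTree G) (o : E → ℤ × ℤ) : E → ℤ :=
  fun e => if e ∈ T.edges then (G.eps e).1 * (o e).1 else 0

/-- The blocks of a cycle-tree: block cycles and block paths, as edge sets. -/
def CycleTree.blocks (T : CycleTree G) : Finset (Finset E) :=
  T.cycles ∪ T.paths.image (fun p => p.1)

/-- A walk crosses from one block to another at each intersection vertex: consecutive
edges of the walk (cyclically) meeting at an intersection vertex never lie in the same
block. -/
def CycleTree.Crosses (T : CycleTree G) {n : ℕ} (W : G.Walk n) : Prop :=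
  ∀ i : Fin n, W.u i.succ ∈ T.interVerts →
    ∀ B ∈ T.blocks, ¬ (W.x i ∈ B ∧ W.x ⟨(i.val + 1) % n, Nat.mod_lt _ i.pos⟩ ∈ B)

/-- A circuit: an Eulerian cycle-tree containing no proper Eulerian sub-cycle-tree. -/
def IsCircuit (G : OSG V E) (T : CycleTree G) : Prop :=
  T.IsEulerian ∧ ∀ T' : CycleTree G, T'.IsEulerian → T'.edges ⊆ T.edges →
    T'.edges = T.edges

/-- Type I circuit: a single balanced cycle. -/
def CycleTree.TypeI (T : CycleTree G) : Prop :=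
  ∃ C, T.cycles = {C} ∧ T.paths = ∅ ∧ G.signSet C = 1

/-- Type II circuit: two edge-disjoint unbalanced cycles sharing exactly one vertex. -/
def CycleTree.TypeII (T : CycleTree G) : Prop :=
  ∃ C1 C2, C1 ≠ C2 ∧ T.cycles = {C1, C2} ∧ T.paths = ∅ ∧
    G.signSet C1 = -1 ∧ G.signSet C2 = -1 ∧ (G.verts C1 ∩ G.verts C2).card = 1

/-- Type III circuit: two vertex-disjoint unbalanced cycles joined by a simple path of
positive length. -/
def CycleTree.TypeIII (T : CycleTree G) : Prop :=
  ∃ C1 C2 P, C1 ≠ C2 ∧ T.cycles = {C1, C2} ∧ T.paths = {P} ∧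
    G.signSet C1 = -1 ∧ G.signSet C2 = -1 ∧ G.verts C1 ∩ G.verts C2 = ∅

/-- End-block cycles: block cycles carrying exactly one intersection vertex. -/
def CycleTree.endBlocks (T : CycleTree G) : Finset (Finset E) :=
  T.cycles.filter fun C => (G.verts C ∩ T.interVerts).card = 1

/-- Indecomposability of a nontrivial integral flow. -/
def Indecomposable (G : OSG V E) (f : E → ℤ) : Prop :=
  G.IsFlow f ∧ (∃ e, f e ≠ 0) ∧
    ¬ ∃ f1 f2 : E → ℤ, G.IsFlow f1 ∧ G.IsFlow f2 ∧ (∃ e, f1 e ≠ 0) ∧ (∃ e, f2 e ≠ 0) ∧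
        (∀ e, f e = f1 e + f2 e) ∧ (∀ e, 0 ≤ f1 e * f2 e)

/-- The coupling `[ε, ε_f]` for an integral function `f`: `-1` where `f < 0`, else `1`. -/
def couplingF (G : OSG V E) (f : E → ℤ) : E → ℤ := fun e => if f e < 0 then -1 else 1

end OSG

namespace OSG

variable {V E : Type} {G : OSG V E}

/-- The edge `e` joins `a` and `b`. -/
def Joins (G : OSG V E) (e : E) (a b : V) : Prop :=
  G.ends e = (a, b) ∨ G.ends e = (b, a)

theorem Joins.symm {e : E} {a b : V} (h : G.Joins e a b) : G.Joins e b a := Or.symm h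

theorem Joins.eq_or_eq {e : E} {a b c d : V} (h : G.Joins e a b) (h' : G.Joins e c d) :
    c = a ∧ d = b ∨ c = b ∧ d = a := by
  rcases h with h | h <;> rcases h' with h' | h' <;> rw [h] at h' <;> simp at h' <;> grind

theorem Joins.left_mem_verts [DecidableEq V] {e : E} {a b : V} {S : Finset E} (h : G.Joins e a b)
    (he : e ∈ S) : a ∈ G.verts S := by
  simp only [verts, mem_union, mem_image]
  rcases h with h | h
  · exact Or.inl ⟨e, he, by rw [h]⟩
  · exact Or.inr ⟨e, he, by rw [h]⟩

theorem Joins.right_mem_verts [DecidableEq V] {e : E} {a b : V} {S : Finset E} (h : G.Joins e a b)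
    (he : e ∈ S) : b ∈ G.verts S :=
  h.symm.left_mem_verts he

theorem mem_verts_iff [DecidableEq V] {S : Finset E} {v : V} :
    v ∈ G.verts S ↔ ∃ e ∈ S, ∃ w, G.Joins e v w := by
  refine ⟨fun h => ?_, fun ⟨e, he, w, hw⟩ => hw.left_mem_verts he⟩
  simp only [verts, mem_union, mem_image] at h
  rcases h with ⟨e, he, rfl⟩ | ⟨e, he, rfl⟩
  · exact ⟨e, he, (G.ends e).2, Or.inl rfl⟩
  · exact ⟨e, he, (G.ends e).1, Or.inr rfl⟩

/-- The list of edges `l` can be traversed in order as a walk from `a` to `b`. -/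
def IsTraversal (G : OSG V E) (a b : V) : List E → Prop
  | [] => a = b
  | e :: l => ∃ c, G.Joins e a c ∧ IsTraversal G c b l

theorem IsTraversal.append {a b c : V} {l l' : List E} (h : G.IsTraversal a b l)
    (h' : G.IsTraversal b c l') : G.IsTraversal a c (l ++ l') := by
  induction l generalizing a with
  | nil => cases h; exact h'
  | cons e l ih =>
    obtain ⟨d, hd, hl⟩ := h
    exact ⟨d, hd, ih hl⟩

theorem Joins.isTraversal {e : E} {a b : V} (h : G.Joins e a b) : G.IsTraversal a b [e] :=
  ⟨b, h, rfl⟩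

theorem IsTraversal.reverse {a b : V} {l : List E} (h : G.IsTraversal a b l) :
    G.IsTraversal b a l.reverse := by
  induction l generalizing a with
  | nil => cases h; rfl
  | cons e l ih =>
    obtain ⟨d, hd, hl⟩ := h
    rw [List.reverse_cons]
    exact (ih hl).append hd.symm.isTraversal

namespace Walk

variable {n : ℕ} (W : G.Walk n)

theorem joins (i : Fin n) : G.Joins (W.x i) (W.u i.castSucc) (W.u i.succ) := by
  cases h : W.fwd i
  · exact Or.inr (W.compat_f i h)
  · exact Or.inl (W.compat_t i h)

/-- The list of edges traversed by a walk. -/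
def edgeList : List E := List.ofFn W.x

@[simp]
theorem length_edgeList : W.edgeList.length = n := List.length_ofFn

theorem mem_edgeList {e : E} : e ∈ W.edgeList ↔ ∃ i, W.x i = e := List.mem_ofFn

theorem mem_support [DecidableEq E] {e : E} : e ∈ W.support ↔ ∃ i, W.x i = e := by
  simp [support]

theorem count_edgeList [DecidableEq E] (e : E) : W.edgeList.count e = W.edgeCount e := by
  rw [edgeList, List.ofFn_eq_map, List.count_eq_countP, List.countP_map,
    List.countP_eq_length_filter, edgeCount]
  have : (univ.filter fun i => W.x i = e) =
      ((List.finRange n).filter ((fun a => a == e) ∘ W.x)).toFinset := by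
    ext i; simp
  rw [this, List.toFinset_card_of_nodup ((List.nodup_finRange n).filter _)]

theorem sum_edgeCount [DecidableEq E] [Fintype E] : ∑ e, W.edgeCount e = n := by
  have := Finset.card_eq_sum_card_fiberwise (f := W.x) (s := univ) (t := univ) (by simp)
  simpa [edgeCount] using this.symm

theorem isTraversal_take (i : Fin (n + 1)) :
    G.IsTraversal (W.u 0) (W.u i) (W.edgeList.take i) := by
  induction i using Fin.induction with
  | zero => exact rfl
  | succ i ih =>
    have : W.edgeList.take (i.succ : ℕ) = W.edgeList.take i.castSucc ++ [W.x i] := by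
      rw [Fin.val_succ, List.take_add_one]
      simp [edgeList]
    rw [this]
    exact ih.append (W.joins i).isTraversal

theorem isTraversal_drop (i : Fin (n + 1)) :
    G.IsTraversal (W.u i) (W.u (Fin.last n)) (W.edgeList.drop i) := by
  induction i using Fin.reverseInduction with
  | last =>
    rw [List.drop_eq_nil_of_le (by simp)]
    exact rfl
  | cast i ih =>
    have : W.edgeList.drop (i.castSucc : ℕ) = W.x i :: W.edgeList.drop i.succ := by
      rw [List.drop_eq_getElem_cons (by simp)]
      simp [edgeList]
    rw [this]
    exact ⟨_, W.joins i, ih⟩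

theorem isTraversal : G.IsTraversal (W.u 0) (W.u (Fin.last n)) W.edgeList := by
  simpa using W.isTraversal_drop 0

/-- A closed walk can be traversed starting from any of its vertices. -/
theorem IsClosed.isTraversal_rotate {W : G.Walk n} (h : W.IsClosed) (i j : Fin (n + 1)) :
    G.IsTraversal (W.u i) (W.u j) (W.edgeList.drop i ++ W.edgeList.take j) := by
  have := W.isTraversal_take j
  rw [show W.u 0 = W.u (Fin.last n) from h] at this
  exact (W.isTraversal_drop i).append this

theorem exists_eq_u_of_mem_verts [DecidableEq V] [DecidableEq E] {v : V}
    (hv : v ∈ G.verts W.support) : ∃ i, v = W.u i := by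
  obtain ⟨e, he, w, hw⟩ := mem_verts_iff.1 hv
  obtain ⟨i, rfl⟩ := W.mem_support.1 he
  rcases (W.joins i).eq_or_eq hw with h | h
  exacts [⟨_, h.1⟩, ⟨_, h.1⟩]

/-- A walk is determined by its vertices and edges, the traversal senses being immaterial. -/
theorem exists_of_joins (u : Fin (n + 1) → V) (x : Fin n → E)
    (h : ∀ i : Fin n, G.Joins (x i) (u i.castSucc) (u i.succ)) :
    ∃ W : G.Walk n, W.u = u ∧ W.x = x := by
  classical
  exact ⟨{
    u := u
    x := x
    fwd := fun i => decide (G.ends (x i) = (u i.castSucc, u i.succ))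
    compat_t := fun i hi => by simpa using hi
    compat_f := fun i hi => (h i).resolve_left (by simpa using hi) }, rfl, rfl⟩

/-- Prepend an edge to a walk. -/
theorem exists_cons {e : E} {a : V} (h : G.Joins e a (W.u 0)) :
    ∃ W' : G.Walk (n + 1), W'.u = Fin.cons a W.u ∧ W'.x = Fin.cons e W.x := by
  refine exists_of_joins _ _ fun i => ?_
  cases i using Fin.cases with
  | zero => simpa using h
  | succ i => simpa using W.joins i

end Walk

theorem IsTraversal.exists_walk {a b : V} {l : List E} (h : G.IsTraversal a b l) :
    ∃ (n : ℕ) (W : G.Walk n), W.u 0 = a ∧ W.u (Fin.last n) = b ∧ W.edgeList = l := by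
  induction l generalizing a with
  | nil =>
    obtain ⟨W, hu, -⟩ := Walk.exists_of_joins (G := G) (n := 0) (fun _ => a) Fin.elim0
      (fun i => i.elim0)
    exact ⟨0, W, by rw [hu], by rw [hu]; exact h, by simp [Walk.edgeList]⟩
  | cons e l ih =>
    obtain ⟨c, hc, hl⟩ := h
    obtain ⟨n, W, rfl, hb, rfl⟩ := ih hl
    obtain ⟨W', hu, hx⟩ := W.exists_cons hc
    exact ⟨n + 1, W', by simp [hu], by rw [hu, ← Fin.succ_last, Fin.cons_succ, hb],
      by simp [Walk.edgeList, hx]⟩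

variable [DecidableEq E]

/-- Two ends of an edge joined by a walk not using that edge yield a cycle through it. -/
theorem IsTraversal.exists_cycle {p q : V} {e : E} {l : List E} (h : G.IsTraversal q p l)
    (hpq : G.Joins e p q) (he : e ∉ l) :
    ∃ C, G.IsCycleSet C ∧ e ∈ C ∧ C ⊆ insert e l.toFinset := by
  obtain ⟨m, ⟨hm, hsub⟩, hmin⟩ := WellFounded.has_min
    (InvImage.wf (fun m : List E => m.length) Nat.lt_wfRel.wf)
    {m | G.IsTraversal q p m ∧ m ⊆ l} ⟨l, h, List.Subset.refl l⟩
  obtain ⟨n, W, rfl, rfl, rfl⟩ := hm.exists_walk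
  have hne : ∀ i j : Fin (n + 1), i < j → W.u i ≠ W.u j := by
    intro i j hij hu
    have hi := W.isTraversal_take i
    rw [hu] at hi
    refine hmin _ ⟨hi.append (W.isTraversal_drop j), ?_⟩ ?_
    · exact List.append_subset.2 ⟨fun _ hf => hsub (List.mem_of_mem_take hf),
        fun _ hf => hsub (List.mem_of_mem_drop hf)⟩
    · simp only [InvImage, List.length_append, List.length_take,
        List.length_drop, Walk.length_edgeList]
      have := j.isLt
      have : (i : ℕ) < j := hij
      show _ < _
      omega
  have hu : Function.Injective W.u := fun i j hij => by
    rcases lt_trichotomy i j with hlt | heq | hlt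
    exacts [absurd hij (hne _ _ hlt), heq, absurd hij.symm (hne _ _ hlt)]
  have hx : Function.Injective W.x := fun i j hij => by
    have hj := W.joins j
    rw [← hij] at hj
    rcases (W.joins i).eq_or_eq hj with ⟨h1, -⟩ | ⟨h1, h2⟩
    · exact (Fin.castSucc_injective n (hu h1)).symm
    · have h1 := congrArg Fin.val (hu h1)
      have h2 := congrArg Fin.val (hu h2)
      simp at h1 h2
      omega
  obtain ⟨W', hu', hx'⟩ := W.exists_cons hpq
  have hxe : ∀ i, W.x i ≠ e := fun i hi => he (hsub (W.mem_edgeList.2 ⟨i, hi⟩))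
  refine ⟨W'.support, ⟨n + 1, W', n.succ_pos, ?_, ?_, ?_, rfl⟩, ?_, ?_⟩
  · rw [Walk.IsClosed, hu', ← Fin.succ_last, Fin.cons_succ, Fin.cons_zero]
  · rw [hx', Fin.cons_injective_iff]
    exact ⟨fun ⟨i, hi⟩ => hxe i hi, hx⟩
  · rw [hu']
    intro i j
    cases i using Fin.cases <;> cases j using Fin.cases
    · simp
    · intro hij
      simp only [Fin.castSucc_zero, Fin.cons_zero, ← Fin.succ_castSucc, Fin.cons_succ] at hij
      exact absurd (hu hij).symm (Fin.castSucc_lt_last _).ne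
    · intro hij
      simp only [Fin.castSucc_zero, Fin.cons_zero, ← Fin.succ_castSucc, Fin.cons_succ] at hij
      exact absurd (hu hij) (Fin.castSucc_lt_last _).ne
    · intro hij
      simp only [← Fin.succ_castSucc, Fin.cons_succ] at hij
      rw [Fin.castSucc_injective n (hu hij)]
  · exact W'.mem_support.2 ⟨0, by simp [hx']⟩
  · intro f hf
    obtain ⟨i, rfl⟩ := W'.mem_support.1 hf
    rw [hx']
    cases i using Fin.cases with
    | zero => simp
    | succ i => simpa using Or.inr (hsub (W.mem_edgeList.2 ⟨i, rfl⟩))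

/-- An endpoint of a simple path lies on only one of its edges. -/
theorem IsPathSet.eq_of_joins {S : Finset E} {a b v w z : V} {e f : E}
    (h : G.IsPathSet S a b) (hv : v = a ∨ v = b) (he : e ∈ S) (hf : f ∈ S)
    (hew : G.Joins e v w) (hfz : G.Joins f v z) : e = f := by
  obtain ⟨n, W, hn, rfl, rfl, hu, -, rfl⟩ := h
  have key : ∀ i w, G.Joins (W.x i) v w → v = W.u i.castSucc ∨ v = W.u i.succ :=
    fun i w h => ((W.joins i).eq_or_eq h).imp And.left And.left
  obtain ⟨i, rfl⟩ := W.mem_support.1 he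
  obtain ⟨j, rfl⟩ := W.mem_support.1 hf
  congr 1
  rcases hv with rfl | rfl <;> rcases key i w hew with hi | hi <;>
    rcases key j z hfz with hj | hj <;>
    · have hi := congrArg Fin.val (hu hi)
      have hj := congrArg Fin.val (hu hj)
      ext
      simp at hi hj
      try omega

variable [DecidableEq V]

/-- A walk starting off `v` either passes through `v` before its end, or stays in the
component of its starting point after deletion of `v`. -/
theorem IsTraversal.split_or_reach {a b v : V} {l : List E} {S : Finset E}
    (h : G.IsTraversal a b l) (ha : a ≠ v) (hS : l.toFinset ⊆ S) :
    (∃ A B, l = A ++ B ∧ B ≠ [] ∧ G.IsTraversal a v A ∧ G.IsTraversal v b B) ∨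
    ∀ w ∈ G.verts l.toFinset, w ≠ v →
      Relation.ReflTransGen (fun p q => p ≠ v ∧ q ≠ v ∧ G.adjOn S p q) a w := by
  induction l generalizing a with
  | nil => right; simp [verts]
  | cons e l ih =>
    obtain ⟨c, hc, hl⟩ := h
    have hw : ∀ w ∈ G.verts (e :: l).toFinset, w = a ∨ w = c ∨ w ∈ G.verts l.toFinset := by
      intro w hw
      obtain ⟨f, hf, z, hz⟩ := mem_verts_iff.1 hw
      rw [List.mem_toFinset, List.mem_cons] at hf
      rcases hf with rfl | hf
      · rcases hc.eq_or_eq hz with h | h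
        exacts [Or.inl h.1, Or.inr (Or.inl h.1)]
      · exact Or.inr (Or.inr (hz.left_mem_verts (List.mem_toFinset.2 hf)))
    by_cases hcv : c = v
    · subst hcv
      rcases eq_or_ne l [] with rfl | hne
      · right
        intro w hwm hwv
        rcases hw w hwm with rfl | rfl | h
        · exact .refl
        · exact absurd rfl hwv
        · simp [verts] at h
      · exact Or.inl ⟨[e], l, rfl, hne, hc.isTraversal, hl⟩
    · have heS : e ∈ S := hS (by simp)
      rcases ih hl hcv (fun f hf => hS (by simp at hf ⊢; exact Or.inr hf)) with
        ⟨A, B, rfl, hB, hA, hB'⟩ | hr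
      · exact Or.inl ⟨e :: A, B, rfl, hB, ⟨c, hc, hA⟩, hB'⟩
      · right
        intro w hwm hwv
        have hac : Relation.ReflTransGen (fun p q => p ≠ v ∧ q ≠ v ∧ G.adjOn S p q) a c :=
          .single ⟨ha, hcv, e, heS, hc⟩
        rcases hw w hwm with rfl | rfl | h
        exacts [.refl, hac, hac.trans (hr w h hwv)]

/-- A closed walk starting at a cut-point of its support returns to it before its end. -/
theorem IsTraversal.exists_return {v : V} {l : List E} (h : G.IsTraversal v v l)
    (hv : G.IsCutPoint l.toFinset v) :
    ∃ e A B, l = e :: A ++ B ∧ B ≠ [] ∧ G.IsTraversal v v (e :: A) := by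
  obtain ⟨a, ha, b, hb, hav, hbv, -, hnot⟩ := hv
  match l, h with
  | [], _ => simp [verts] at ha
  | e :: l, ⟨c, hc, hl⟩ =>
    have hw : ∀ w ∈ G.verts (e :: l).toFinset, w ≠ v → w = c ∨ w ∈ G.verts l.toFinset := by
      intro w hw hwv
      obtain ⟨f, hf, z, hz⟩ := mem_verts_iff.1 hw
      rw [List.mem_toFinset, List.mem_cons] at hf
      rcases hf with rfl | hf
      · rcases hc.eq_or_eq hz with h | h
        exacts [absurd h.1 hwv, Or.inl h.1]
      · exact Or.inr (hz.left_mem_verts (List.mem_toFinset.2 hf))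
    by_cases hcv : c = v
    · subst hcv
      rcases eq_or_ne l [] with rfl | hne
      · rcases hw a ha hav with h | h
        · exact absurd h hav
        · simp [verts] at h
      · exact ⟨e, [], l, rfl, hne, hc.isTraversal⟩
    · rcases hl.split_or_reach hcv (S := (e :: l).toFinset) (by simp) with
        ⟨A, B, rfl, hB, hA, -⟩ | hr
      · exact ⟨e, A, B, rfl, hB, ⟨c, hc, hA⟩⟩
      · have hreach : ∀ w ∈ G.verts (e :: l).toFinset, w ≠ v → Relation.ReflTransGen
            (fun p q => p ≠ v ∧ q ≠ v ∧ G.adjOn (e :: l).toFinset p q) c w := by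
          intro w hwm hwv
          rcases hw w hwm hwv with rfl | h
          exacts [.refl, hr w h hwv]
        have : Std.Symm fun p q => p ≠ v ∧ q ≠ v ∧ G.adjOn (e :: l).toFinset p q :=
          ⟨fun p q ⟨hp, hq, f, hf, hj⟩ => ⟨hq, hp, f, hf, hj.symm⟩⟩
        exact absurd ((Relation.ReflTransGen.stdSymm.symm _ _ (hreach a ha hav)).trans
          (hreach b hb hbv)) hnot

/-- A walk can be split at any of its vertices. -/
theorem IsTraversal.exists_split {a b v : V} {l : List E} (h : G.IsTraversal a b l)
    (hv : v ∈ G.verts l.toFinset) :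
    ∃ A B, l = A ++ B ∧ G.IsTraversal a v A ∧ G.IsTraversal v b B := by
  obtain ⟨n, W, rfl, rfl, rfl⟩ := h.exists_walk
  have : W.edgeList.toFinset = W.support := by
    ext e
    rw [List.mem_toFinset, W.mem_support, W.mem_edgeList]
  rw [this] at hv
  obtain ⟨i, rfl⟩ := W.exists_eq_u_of_mem_verts hv
  exact ⟨_, _, (List.take_append_drop i _).symm, W.isTraversal_take i, W.isTraversal_drop i⟩

namespace CycleTree

variable (T : CycleTree G)

theorem mem_edges_iff {e : E} : e ∈ T.edges ↔ ∃ B ∈ T.blocks, e ∈ B := by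
  rw [T.partition]
  simp [blocks, or_and_right, exists_or]

theorem edges_eq : T.edges = T.cycleEdges ∪ T.pathEdges := T.partition

theorem indicatorNat_of_mem_cycle {C : Finset E} {e : E} (hC : C ∈ T.cycles) (he : e ∈ C) :
    T.indicatorNat e = 1 :=
  if_pos (mem_biUnion.2 ⟨C, hC, he⟩)

theorem not_mem_cycle_of_mem_path {p : Finset E × V × V} {e : E} (hp : p ∈ T.paths)
    (he : e ∈ p.1) {C : Finset E} (hC : C ∈ T.cycles) : e ∉ C :=
  fun h => disjoint_left.1 (T.cyc_path_disj C hC p hp) h he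

theorem indicatorNat_of_mem_path {p : Finset E × V × V} {e : E} (hp : p ∈ T.paths)
    (he : e ∈ p.1) : T.indicatorNat e = 2 := by
  rw [indicatorNat, if_neg, if_pos (show e ∈ T.pathEdges from mem_biUnion.2 ⟨p, hp, he⟩)]
  intro h
  obtain ⟨C, hC, heC⟩ := mem_biUnion.1 h
  exact T.not_mem_cycle_of_mem_path hp he hC heC

theorem indicatorNat_pos_iff {e : E} : 0 < T.indicatorNat e ↔ e ∈ T.edges := by
  rw [edges_eq, mem_union, indicatorNat]
  split_ifs with h1 h2 <;> simp [*]

theorem blocks_eq_of_mem {B B' : Finset E} {e : E} (hB : B ∈ T.blocks) (hB' : B' ∈ T.blocks)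
    (he : e ∈ B) (he' : e ∈ B') : B = B' := by
  simp only [blocks, mem_union, mem_image] at hB hB'
  rcases hB with hB | ⟨p, hp, rfl⟩ <;> rcases hB' with hB' | ⟨q, hq, rfl⟩
  · by_contra hne
    exact disjoint_left.1 (T.cyc_disj _ hB _ hB' hne) he he'
  · exact absurd he (T.not_mem_cycle_of_mem_path hq he' hB)
  · exact absurd he' (T.not_mem_cycle_of_mem_path hp he hB')
  · by_contra hne
    have hj : G.Joins e (G.ends e).1 (G.ends e).2 := Or.inl rfl
    exact disjoint_left.1 (T.path_vdisj _ hp _ hq fun h => hne (by rw [h]))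
      (hj.left_mem_verts he) (hj.left_mem_verts he')

/-- A closed walk with the support of a cycle-tree uses every edge at least as often as
prescribed by the indicator. -/
theorem indicatorNat_le_edgeCount {n : ℕ} {W : G.Walk n} (hW : W.IsClosed)
    (hs : W.support = T.edges) (e : E) : T.indicatorNat e ≤ W.edgeCount e := by
  by_cases he : e ∈ T.edges
  swap
  · have := T.indicatorNat_pos_iff.not.2 he
    omega
  obtain ⟨i, hi⟩ := W.mem_support.1 (hs ▸ he)
  have hpos : 0 < W.edgeCount e := card_pos.2 ⟨i, by simp [hi]⟩
  obtain ⟨B, hB, heB⟩ := T.mem_edges_iff.1 he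
  simp only [blocks, mem_union, mem_image] at hB
  rcases hB with hB | ⟨p, hp, rfl⟩
  · rw [T.indicatorNat_of_mem_cycle hB heB]
    exact hpos
  · rw [T.indicatorNat_of_mem_path hp heB]
    by_contra hlt
    have hsplit : W.edgeList = W.edgeList.take i ++ e :: W.edgeList.drop (i + 1) := by
      conv_lhs => rw [← List.take_append_drop i W.edgeList,
        List.drop_eq_getElem_cons (i := i) (by simp)]
      simp [Walk.edgeList, hi]
    have hcount := W.count_edgeList e
    rw [hsplit, List.count_append, List.count_cons_self] at hcount
    have hj := W.joins i
    rw [hi] at hj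
    obtain ⟨C, hC, heC, hCs⟩ := (hW.isTraversal_rotate i.succ i.castSucc).exists_cycle hj (by
      rw [← List.count_eq_zero, List.count_append]
      simp only [Fin.val_succ, Fin.val_castSucc]
      omega)
    refine T.not_mem_cycle_of_mem_path hp heB (T.cyc_all C (fun f hf => ?_) hC) heC
    rcases mem_insert.1 (hCs hf) with rfl | hf
    · exact he
    · rw [List.mem_toFinset, List.mem_append] at hf
      have : f ∈ W.edgeList := hf.elim List.mem_of_mem_drop List.mem_of_mem_take
      exact hs ▸ W.mem_support.2 (W.mem_edgeList.1 this)

theorem endpoint_of_mem_interVerts {p : Finset E × V × V} {v : V} (hp : p ∈ T.paths)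
    (hv : v ∈ T.interVerts) (hvp : v ∈ G.verts p.1) : v = p.2.1 ∨ v = p.2.2 := by
  simp only [interVerts, interVertsOf, mem_union, mem_biUnion] at hv
  rcases hv with ⟨C, hC, C', -, hv⟩ | ⟨q, hq, hv⟩
  · have hvC : v ∈ G.verts C := by
      split_ifs at hv with h
      · simp at hv
      · exact (mem_inter.1 hv).1
    obtain ⟨C1, -, C2, -, -, h1, h2, h3⟩ := T.path_meets p hp
    have hvi : v ∈ G.verts C ∩ G.verts p.1 := mem_inter.2 ⟨hvC, hvp⟩
    by_cases hc1 : C = C1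
    · rw [hc1, h1] at hvi
      exact Or.inl (mem_singleton.1 hvi)
    by_cases hc2 : C = C2
    · rw [hc2, h2] at hvi
      exact Or.inr (mem_singleton.1 hvi)
    rw [h3 C hC hc1 hc2] at hvi
    simp at hvi
  · have hvq : v ∈ G.verts q.1 := by
      obtain ⟨C1, -, C2, -, -, h1, h2, -⟩ := T.path_meets q hq
      rw [mem_insert, mem_singleton] at hv
      rcases hv with rfl | rfl
      · exact (mem_inter.1 (h1 ▸ mem_singleton_self q.2.1)).2
      · exact (mem_inter.1 (h2 ▸ mem_singleton_self q.2.2)).2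
    have : p = q := by
      by_contra hne
      exact disjoint_left.1 (T.path_vdisj p hp q hq hne) hvp hvq
    subst this
    simpa using hv

/-- A closed walk with the prescribed edge counts cannot start and end in the same block at
an intersection vertex. -/
theorem not_mem_block_of_isTraversal {v : V} {y z : E} {l : List E} {K : Finset E}
    (hl : G.IsTraversal v v l) (hcount : ∀ e, l.count e = T.indicatorNat e)
    (hv : v ∈ T.interVerts) (hy : y ∈ l.head?) (hz : z ∈ l.getLast?) (hK : K ∈ T.blocks)
    (hyK : y ∈ K) : z ∉ K := by
  intro hzK
  have hsupp : l.toFinset = T.edges := by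
    ext e
    rw [List.mem_toFinset, ← List.count_pos_iff, hcount, indicatorNat_pos_iff]
  obtain ⟨y', A, D, rfl, hD, hA⟩ := hl.exists_return (hsupp ▸ T.cuts v hv)
  obtain rfl : y' = y := by simpa using hy
  obtain ⟨D, z', rfl⟩ := List.eq_nil_or_concat' D |>.resolve_left hD
  obtain rfl : z' = z := by
    rw [← List.append_assoc, List.getLast?_concat] at hz
    exact Option.some.inj hz
  obtain ⟨c, hc, hA⟩ := hA
  have hcy := hcount y'
  have hcz := hcount z'
  simp only [List.count_append, List.count_cons, List.count_nil] at hcy hcz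
  have hcycle : y' ∉ A → ∃ C ∈ T.cycles, y' ∈ C ∧ C ⊆ insert y' A.toFinset := fun h => by
    obtain ⟨C, hC, hyC, hCs⟩ := hA.exists_cycle hc h
    refine ⟨C, T.cyc_all C (hCs.trans ?_) hC, hyC, hCs⟩
    rw [← hsupp]
    intro f hf
    simp at hf ⊢
    tauto
  have hK' := hK
  simp only [blocks, mem_union, mem_image] at hK'
  rcases hK' with hKc | ⟨p, hp, rfl⟩
  · rw [T.indicatorNat_of_mem_cycle hKc hyK] at hcy
    rw [T.indicatorNat_of_mem_cycle hKc hzK] at hcz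
    simp only [beq_self_eq_true, if_true] at hcy hcz
    obtain ⟨C, hC, hyC, hCs⟩ := hcycle (by rw [← List.count_eq_zero]; omega)
    obtain rfl : K = C := T.blocks_eq_of_mem hK (mem_union_left _ hC) hyK hyC
    have hz' := hCs hzK
    rw [mem_insert, List.mem_toFinset] at hz'
    rcases hz' with rfl | hz'
    · simp only [beq_self_eq_true, if_true] at hcy
      omega
    · have := List.count_pos_iff.2 hz'
      omega
  · rw [T.indicatorNat_of_mem_path hp hyK] at hcy
    have hlast : ∃ w, G.Joins z' v w := by
      have hrev := hl.reverse
      simp only [List.reverse_append, List.reverse_cons, List.reverse_nil, List.nil_append,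
        List.cons_append] at hrev
      obtain ⟨w, hw, -⟩ := hrev
      exact ⟨w, hw⟩
    obtain ⟨w, hw⟩ := hlast
    obtain rfl := (T.path_is p hp).eq_of_joins
      (T.endpoint_of_mem_interVerts hp hv (hc.left_mem_verts hyK)) hyK hzK hc hw
    simp only [beq_self_eq_true, if_true] at hcy
    obtain ⟨C, hC, hyC, -⟩ := hcycle (by rw [← List.count_eq_zero]; omega)
    exact T.not_mem_cycle_of_mem_path hp hyK hC hyC

/-- A closed walk with the edge counts prescribed by the indicator crosses blocks at
intersection vertices. -/
theorem crosses_of_edgeCount {n : ℕ} {W : G.Walk n} (hW : W.IsClosed)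
    (hcount : ∀ e, W.edgeCount e = T.indicatorNat e) : T.Crosses W := by
  rintro i hi K hK ⟨hx, hx'⟩
  refine T.not_mem_block_of_isTraversal (hW.isTraversal_rotate i.succ i.succ)
    (fun e => ?_) hi ?_ ?_ hK hx' hx
  · rw [← hcount, ← W.count_edgeList, List.count_append, add_comm, ← List.count_append,
      List.take_append_drop]
  · rcases Nat.lt_or_ge (i + 1) n with h | h
    · rw [List.drop_eq_getElem_cons (by simpa using h)]
      simp [Walk.edgeList, Nat.mod_eq_of_lt h]
    · have hn : (i : ℕ) + 1 = n := by omega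
      rw [List.drop_eq_nil_of_le (by simpa using h), List.take_of_length_le (by simp [hn])]
      simp [Walk.edgeList, hn, List.head?_eq_getElem?, i.pos]
  · rw [Fin.val_succ, List.take_add_one]
    simp [Walk.edgeList]

/-- Each block has a closed traversal from each of its vertices, with edge counts
prescribed by the indicator. -/
theorem exists_block_traversal {K : Finset E} {v : V} (hK : K ∈ T.blocks)
    (hv : v ∈ G.verts K) : ∃ l, G.IsTraversal v v l ∧
      ∀ e, l.count e = if e ∈ K then T.indicatorNat e else 0 := by
  have hnodup : ∀ {n : ℕ} {W : G.Walk n}, Function.Injective W.x → ∀ e,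
      W.edgeList.count e = if e ∈ W.support then 1 else 0 := by
    intro n W hx e
    have : e ∈ W.support ↔ e ∈ W.edgeList := by rw [W.mem_support, W.mem_edgeList]
    simp only [this]
    exact (List.nodup_ofFn.2 hx).count
  simp only [blocks, mem_union, mem_image] at hK
  rcases hK with hK | ⟨p, hp, rfl⟩
  · obtain ⟨n, W, -, hW, hx, -, rfl⟩ := T.cyc_is K hK
    obtain ⟨i, rfl⟩ := W.exists_eq_u_of_mem_verts hv
    refine ⟨_, hW.isTraversal_rotate i i, fun e => ?_⟩
    rw [List.count_append, add_comm, ← List.count_append, List.take_append_drop, hnodup hx]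
    split_ifs with he
    · rw [T.indicatorNat_of_mem_cycle hK he]
    · rfl
  · obtain ⟨n, W, -, -, -, -, hx, hs⟩ := T.path_is p hp
    rw [← hs] at hv
    obtain ⟨i, rfl⟩ := W.exists_eq_u_of_mem_verts hv
    refine ⟨_, ((W.isTraversal_take i).reverse.append W.isTraversal).append
      (W.isTraversal_drop i).reverse, fun e => ?_⟩
    have htd : (W.edgeList.take i).count e + (W.edgeList.drop i).count e =
        W.edgeList.count e := by
      rw [← List.count_append, List.take_append_drop]
    rw [List.count_append, List.count_append, List.count_reverse, List.count_reverse]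
    rw [hnodup hx, hs] at *
    split_ifs at * with he
    · rw [T.indicatorNat_of_mem_path hp he]
      omega
    · omega

/-- A closed walk that misses an edge of the cycle-tree passes through an end of a missed
edge. -/
theorem exists_adjacent_edge {a : V} {l : List E} (hl : G.IsTraversal a a l)
    (ha : a ∈ G.verts T.edges) {e : E} (he : e ∈ T.edges) (hel : e ∉ l) :
    ∃ f ∈ T.edges, f ∉ l ∧ ∃ v w, G.Joins f v w ∧
      ∃ A B, l = A ++ B ∧ G.IsTraversal a v A ∧ G.IsTraversal v a B := by
  by_contra hno
  have hstep : ∀ v, G.Reach T.edges a v →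
      ∃ A B, l = A ++ B ∧ G.IsTraversal a v A ∧ G.IsTraversal v a B := by
    intro v hv
    induction hv with
    | refl => exact ⟨[], l, rfl, rfl, hl⟩
    | tail _ hadj ih =>
      obtain ⟨f, hf, hj⟩ := hadj
      have hfl : f ∈ l := by
        by_contra hfl
        exact hno ⟨f, hf, hfl, _, _, hj, ih⟩
      exact hl.exists_split (Joins.right_mem_verts hj (List.mem_toFinset.2 hfl))
  have hj : G.Joins e (G.ends e).1 (G.ends e).2 := Or.inl rfl
  exact hno ⟨e, he, hel, _, _, hj, hstep _ (T.conn a ha _ (hj.left_mem_verts he))⟩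

/-- A closed walk that covers each block exactly as prescribed or not at all extends to one
with the prescribed counts on all edges. -/
theorem exists_traversal_of_blockwise {a : V} (ha : a ∈ G.verts T.edges) (k : ℕ) :
    ∀ l : List E, (T.edges \ l.toFinset).card = k → G.IsTraversal a a l →
      (∀ e ∈ l, l.count e = T.indicatorNat e) →
      (∀ K ∈ T.blocks, ∀ e ∈ K, e ∈ l → ∀ f ∈ K, f ∈ l) →
      ∃ l', G.IsTraversal a a l' ∧ ∀ e, l'.count e = T.indicatorNat e := by
  induction k using Nat.strong_induction_on with
  | _ k ih =>
  intro l hk hl hcount hblock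
  by_cases hall : ∀ e ∈ T.edges, e ∈ l
  · refine ⟨l, hl, fun e => ?_⟩
    by_cases he : e ∈ l
    · exact hcount e he
    · rw [List.count_eq_zero.2 he]
      have := T.indicatorNat_pos_iff.not.2 fun h => he (hall e h)
      omega
  · push Not at hall
    obtain ⟨e, he, hel⟩ := hall
    obtain ⟨f, hf, hfl, v, w, hj, A, B, rfl, hA, hB⟩ := T.exists_adjacent_edge hl ha he hel
    obtain ⟨K, hK, hfK⟩ := T.mem_edges_iff.1 hf
    obtain ⟨D, hD, hDc⟩ := T.exists_block_traversal hK (hj.left_mem_verts hfK)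
    have hmem : ∀ g, g ∈ D ↔ g ∈ K := by
      intro g
      rw [← List.count_pos_iff, hDc]
      split_ifs with hg
      · simpa [hg] using T.indicatorNat_pos_iff.2 (T.mem_edges_iff.2 ⟨K, hK, hg⟩)
      · simpa using hg
    have hKl : ∀ g ∈ K, g ∉ A ++ B := fun g hg hgl => hfl (hblock K hK g hg hgl f hfK)
    have hmem' : ∀ g, g ∈ A ++ D ++ B ↔ g ∈ A ++ B ∨ g ∈ K := by
      intro g
      simp only [List.mem_append, hmem]
      tauto
    refine ih _ ?_ (A ++ D ++ B) rfl ((hA.append hD).append hB) ?_ ?_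
    · rw [← hk]
      refine card_lt_card ⟨?_, fun h => ?_⟩
      · intro g
        simp only [mem_sdiff, List.mem_toFinset, hmem']
        tauto
      · have := h (mem_sdiff.2 ⟨hf, by simpa using hfl⟩)
        rw [mem_sdiff, List.mem_toFinset, hmem'] at this
        exact this.2 (Or.inr hfK)
    · intro g hg
      have hsum : (A ++ D ++ B).count g = (A ++ B).count g + D.count g := by
        simp only [List.count_append]
        omega
      rw [hsum, hDc]
      split_ifs with hgK
      · rw [List.count_eq_zero.2 (hKl g hgK), zero_add]
      · exact hcount g (((hmem' g).1 hg).resolve_right hgK)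
    · intro K' hK' g hgK' hg g' hg'
      rw [hmem'] at hg ⊢
      rcases hg with hg | hg
      · exact Or.inl (hblock K' hK' g hgK' hg g' hg')
      · rw [T.blocks_eq_of_mem hK hK' hg hgK']
        exact Or.inr hg'

/-- A cycle-tree has an edge. -/
theorem edges_nonempty : T.edges.Nonempty := by
  obtain ⟨C, hC⟩ := T.cycles_nonempty
  obtain ⟨n, W, hn, -, -, -, rfl⟩ := T.cyc_is C hC
  exact ⟨W.x ⟨0, hn⟩, T.mem_edges_iff.2
    ⟨_, mem_union_left _ hC, W.mem_support.2 ⟨_, rfl⟩⟩⟩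

theorem support_eq_edges {n : ℕ} {W : G.Walk n}
    (hW : ∀ e, W.edgeCount e = T.indicatorNat e) : W.support = T.edges := by
  ext e
  rw [← T.indicatorNat_pos_iff, ← hW, W.mem_support, ← W.mem_edgeList, ← W.count_edgeList,
    List.count_pos_iff]

/-- A cycle-tree has a closed walk with edge counts prescribed by the indicator. -/
theorem exists_closed_walk : ∃ (n : ℕ) (W : G.Walk n), 0 < n ∧ W.IsClosed ∧
    ∀ e, W.edgeCount e = T.indicatorNat e := by
  obtain ⟨e, he⟩ := T.edges_nonempty
  have hj : G.Joins e (G.ends e).1 (G.ends e).2 := Or.inl rfl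
  obtain ⟨l, hl, hcount⟩ := T.exists_traversal_of_blockwise (hj.left_mem_verts he) _ [] rfl
    rfl (by simp) (by simp)
  obtain ⟨n, W, h0, hn, rfl⟩ := hl.exists_walk
  have hW : ∀ e, W.edgeCount e = T.indicatorNat e := fun e => by
    rw [← hcount, W.count_edgeList]
  obtain ⟨i, -⟩ := W.mem_support.1 (T.support_eq_edges hW ▸ he)
  exact ⟨n, W, i.pos, h0.trans hn.symm, hW⟩

end CycleTree

end OSG

/-- every cycle-tree carries a closed walk using each block-cycle edge
once and each block-path edge twice, crossing blocks at cut-points; such walks are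
exactly the minimum-length closed walks using all edges of `T`. -/
theorem OSG.cycleTree_minimum_closed_walk
    {V E : Type} [DecidableEq V] [DecidableEq E] [Fintype E] {G : OSG V E}
    (T : OSG.CycleTree G) :
    (∃ (n : ℕ) (W : G.Walk n), 0 < n ∧ W.IsClosed ∧
      (∀ e, W.edgeCount e = T.indicatorNat e) ∧ T.Crosses W) ∧
    (∀ (n : ℕ) (W : G.Walk n), 0 < n → W.IsClosed →
      (∀ e, W.edgeCount e = T.indicatorNat e) → T.Crosses W →
      ∀ (m : ℕ) (W' : G.Walk m), W'.IsClosed → W'.support = T.edges → n ≤ m) ∧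
    (∀ (m : ℕ) (W' : G.Walk m), 0 < m → W'.IsClosed → W'.support = T.edges →
      (∀ (m' : ℕ) (W'' : G.Walk m'), W''.IsClosed → W''.support = T.edges → m ≤ m') →
      (∀ e, W'.edgeCount e = T.indicatorNat e) ∧ T.Crosses W') := by
  refine ⟨?_, ?_, ?_⟩
  · obtain ⟨n, W, hn, hW, hcount⟩ := T.exists_closed_walk
    exact ⟨n, W, hn, hW, hcount, T.crosses_of_edgeCount hW hcount⟩
  · intro n W _ _ hcount _ m W' hW' hs
    rw [← W.sum_edgeCount, ← W'.sum_edgeCount]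
    exact sum_le_sum fun e _ => (hcount e).trans_le (T.indicatorNat_le_edgeCount hW' hs e)
  · intro m W' _ hW' hs hmin
    obtain ⟨n, W, -, hW, hcount⟩ := T.exists_closed_walk
    have hle := T.indicatorNat_le_edgeCount hW' hs
    have hmn := hmin n W hW (T.support_eq_edges hcount)
    rw [← W.sum_edgeCount, ← W'.sum_edgeCount] at hmn
    simp only [hcount] at hmn
    have heq : ∀ e, W'.edgeCount e = T.indicatorNat e := fun e =>
      ((sum_eq_sum_iff_of_le fun e _ => hle e).1
        (le_antisymm (sum_le_sum fun e _ => hle e) hmn) e (mem_univ e)).symm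
    exact ⟨heq, T.crosses_of_edgeCount hW' heq⟩
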